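/- If a contract satisfies the incentive compatibility constraints and θ_i > θ_j, then p_i ≥ p_j. -/

import Mathlib

/-- If a contract satisfies the incentive compatibility constraints and `θ i > θ j`,
then `p i ≥ p j`. -/
theorem ic_higher_type_more_power
    (K : ℕ) (hK : 1 ≤ K) (θ p t : ℕ → ℝ)
    (hθpos : ∀ k, 1 ≤ k → k ≤ K → 0 < θ k)
    (hθmono : ∀ i j, 1 ≤ i → i < j → j ≤ K → θ i < θ j)
    (hp : ∀ k, 1 ≤ k → k ≤ K → 0 ≤ p k)
    (ht : ∀ k, 1 ≤ k → k ≤ K → 0 ≤ t k)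
    (hIC : ∀ k j, 1 ≤ k → k ≤ K → 1 ≤ j → j ≤ K →
      θ k * t k - p k ≥ θ k * t j - p j) :
    ∀ i j, 1 ≤ i → i ≤ K → 1 ≤ j → j ≤ K → θ i > θ j → p i ≥ p j := by
  intro i j hi hiK hj hjK hij
  have h1 := hIC i j hi hiK hj hjK
  have h2 := hIC j i hj hjK hi hiK
  have h3 : 0 ≤ (θ i - θ j) * (t i - t j) := by linarith
  have h4 : 0 ≤ t i - t j := nonneg_of_mul_nonneg_right h3 (sub_pos.mpr hij)
  have h5 := mul_nonneg (hθpos j hj hjK).le h4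
  linarith
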